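/- Let n ≥ 1, α ∈ (0,1), T > 0, and let f : [0,T]×ℝⁿ → ℝ^{n×n} be continuous with K := sup_{τ∈[0,T]} sup_{y ≠ y′} |f(τ,y) − f(τ,y′)|/|y−y′|^α < ∞ (the matrix norm being entrywise sup). Define v(t,x) := Σ_{i,j=1}^n ∫₀^t ∫_{ℝⁿ} ∂²_{x_i x_j}Γ(t−τ, x−y) · (f_{ij}(τ,y) − f_{ij}(τ,x)) dy dτ, the integral being absolutely convergent. Then there is a constant C depending only on n and α such that: (i) |v(t,x′) − v(t,x)| ≤ C·K·|x′−x|^α for all t ∈ (0,T] and x, x′ ∈ ℝⁿ; (ii) |v(t,x)| ≤ C·K·t^{α/2} for all t ∈ (0,T] and x ∈ ℝⁿ; (iii) |v(t′,x) − v(t,x)| ≤ C·K·(t′−t)^{α/2} for all 0 ≤ t < t′ ≤ T and x ∈ ℝⁿ. -/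

import Mathlib

open MeasureTheory
open scoped BigOperators ENNReal Topology

noncomputable section

/-- The heat kernel `Γ(t,x) = (4πt)^{-n/2} exp(-|x|²/(4t))` on `ℝⁿ`. -/
def heatKernel (n : ℕ) (t : ℝ) (x : EuclideanSpace ℝ (Fin n)) : ℝ :=
  (4 * Real.pi * t) ^ (-(n : ℝ) / 2) * Real.exp (-‖x‖ ^ 2 / (4 * t))

/-- The `i`-th standard basis vector of `ℝⁿ`. -/
def stdBasis (n : ℕ) (i : Fin n) : EuclideanSpace ℝ (Fin n) :=
  EuclideanSpace.single i 1

/-- Second spatial partial derivative `∂²_{x_i x_j} Γ(t,·)` of the heat kernel. -/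
def d2Heat (n : ℕ) (i j : Fin n) (t : ℝ) (x : EuclideanSpace ℝ (Fin n)) : ℝ :=
  fderiv ℝ (fun z => fderiv ℝ (heatKernel n t) z (stdBasis n j)) x (stdBasis n i)

/-- The integrand `Σ_{i,j} ∂²_{ij}Γ(t-τ, x-y) (f_{ij}(τ,y) - f_{ij}(τ,x))`. -/
def d2Integrand (n : ℕ) (f : ℝ → EuclideanSpace ℝ (Fin n) → Matrix (Fin n) (Fin n) ℝ)
    (t : ℝ) (x : EuclideanSpace ℝ (Fin n)) (τ : ℝ) (y : EuclideanSpace ℝ (Fin n)) : ℝ :=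
  ∑ i : Fin n, ∑ j : Fin n, d2Heat n i j (t - τ) (x - y) * (f τ y i j - f τ x i j)

/-- The explicit Gaussian form of `∂²_{x_i x_j} Γ(s,·)`. -/
def hessKernel (n : ℕ) (i j : Fin n) (s : ℝ) (z : EuclideanSpace ℝ (Fin n)) : ℝ :=
  (4 * Real.pi * s) ^ (-(n : ℝ) / 2) * Real.exp (-‖z‖ ^ 2 / (4 * s)) *
    (z i * z j / (4 * s ^ 2) - (if i = j then 1 else 0) / (2 * s))

/-- A Gaussian of width `b`, normalised like the heat kernel, used to dominate its derivatives. -/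
def wideKernel (n : ℕ) (b s : ℝ) (z : EuclideanSpace ℝ (Fin n)) : ℝ :=
  (4 * Real.pi * s) ^ (-(n : ℝ) / 2) * Real.exp (-‖z‖ ^ 2 / (b * s))

lemma hasFDerivAt_heatKernel {n : ℕ} (t : ℝ) (z : EuclideanSpace ℝ (Fin n)) :
    HasFDerivAt (heatKernel n t) ((-(heatKernel n t z) / (2 * t)) • innerSL ℝ z) z := by
  have h1 : HasFDerivAt (fun x : EuclideanSpace ℝ (Fin n) => ‖x‖ ^ 2) (2 • innerSL ℝ z) z := by
    simpa using (hasStrictFDerivAt_norm_sq z).hasFDerivAt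
  have h2 := (((h1.neg.mul_const (4 * t)⁻¹).exp).const_mul ((4 * Real.pi * t) ^ (-(n : ℝ) / 2)))
  refine (h2.congr_fderiv ?_)
  ext w
  simp [heatKernel, div_eq_mul_inv]
  ring

lemma fderiv_heatKernel_stdBasis {n : ℕ} (t : ℝ) (j : Fin n)
    (z : EuclideanSpace ℝ (Fin n)) :
    fderiv ℝ (heatKernel n t) z (stdBasis n j) = -(heatKernel n t z) / (2 * t) * z j := by
  rw [(hasFDerivAt_heatKernel t z).fderiv]
  simp [stdBasis, EuclideanSpace.inner_single_right]

lemma hasFDerivAt_gradient_heatKernel {n : ℕ} (t : ℝ) (j : Fin n)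
    (z : EuclideanSpace ℝ (Fin n)) :
    HasFDerivAt (fun z => fderiv ℝ (heatKernel n t) z (stdBasis n j))
      ((-(heatKernel n t z) / (2 * t)) • (EuclideanSpace.proj j : EuclideanSpace ℝ (Fin n) →L[ℝ] ℝ) +
        (z j * (heatKernel n t z / (2 * t) / (2 * t))) • innerSL ℝ z) z := by
  have h0 : (fun z => fderiv ℝ (heatKernel n t) z (stdBasis n j)) =
      fun z => -(heatKernel n t z) * (2 * t)⁻¹ * z j := by
    funext z
    rw [fderiv_heatKernel_stdBasis t, div_eq_mul_inv]
  rw [h0]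
  have h1 : HasFDerivAt (fun z : EuclideanSpace ℝ (Fin n) => z j)
      (EuclideanSpace.proj j : EuclideanSpace ℝ (Fin n) →L[ℝ] ℝ) z :=
    (EuclideanSpace.proj j : EuclideanSpace ℝ (Fin n) →L[ℝ] ℝ).hasFDerivAt
  refine ((((hasFDerivAt_heatKernel t z).neg.mul_const (2 * t)⁻¹).mul h1)).congr_fderiv ?_
  ext w
  simp [div_eq_mul_inv]
  ring

lemma d2Heat_eq_hessKernel {n : ℕ} {t : ℝ} (ht : 0 < t) (i j : Fin n)
    (z : EuclideanSpace ℝ (Fin n)) : d2Heat n i j t z = hessKernel n i j t z := by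
  rw [d2Heat, (hasFDerivAt_gradient_heatKernel t j z).fderiv]
  simp only [stdBasis, hessKernel, heatKernel, add_apply, smul_apply, innerSL_apply_apply,
    EuclideanSpace.inner_single_right, smul_eq_mul, PiLp.proj_apply, PiLp.single_apply, one_mul]
  by_cases h : i = j
  · subst h
    simp
    field_simp
    ring
  · simp [h, Ne.symm h]
    field_simp
    norm_num

lemma integrable_wideKernel {n : ℕ} {b s : ℝ} (hb : 0 < b) (hs : 0 < s) :
    Integrable (wideKernel n b s) := by
  have h := GaussianFourier.integrable_cexp_neg_mul_sq_norm_add (V := EuclideanSpace ℝ (Fin n))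
    (b := ((b * s)⁻¹ : ℝ)) (by rw [Complex.ofReal_re]; positivity) 0 0
  have h2 := h.re
  refine (h2.const_mul ((4 * Real.pi * s) ^ (-(n : ℝ) / 2))).congr (Filter.Eventually.of_forall ?_)
  intro z
  simp only [wideKernel]
  congr 1
  simp only [zero_mul, add_zero]
  rw [show (-(((b * s)⁻¹ : ℝ) : ℂ) * (‖z‖ : ℂ) ^ 2) = ((-‖z‖ ^ 2 / (b * s) : ℝ) : ℂ) by
    push_cast; field_simp]
  rw [← Complex.ofReal_exp]
  rfl

lemma integral_wideKernel {n : ℕ} {b s : ℝ} (hb : 0 < b) (hs : 0 < s) :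
    ∫ z, wideKernel n b s z = (b / 4) ^ ((n : ℝ) / 2) := by
  have h := GaussianFourier.integral_rexp_neg_mul_sq_norm (V := EuclideanSpace ℝ (Fin n))
    (b := (b * s)⁻¹) (by positivity)
  have h2 : ∀ z : EuclideanSpace ℝ (Fin n),
      wideKernel n b s z = (4 * Real.pi * s) ^ (-(n : ℝ) / 2) * Real.exp (-(b * s)⁻¹ * ‖z‖ ^ 2) := by
    intro z
    simp only [wideKernel]
    congr 2
    field_simp
  simp_rw [h2]
  rw [integral_const_mul, h, finrank_euclideanSpace_fin, neg_div, Real.rpow_neg (by positivity),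
    ← Real.inv_rpow (by positivity), ← Real.mul_rpow (by positivity) (by positivity)]
  congr 1
  field_simp

lemma wideKernel_nonneg {n : ℕ} {b s : ℝ} (hs : 0 < s) (z : EuclideanSpace ℝ (Fin n)) :
    0 ≤ wideKernel n b s z := by
  unfold wideKernel; positivity

/-- Polynomial factors are absorbed by widening the Gaussian. -/
lemma one_add_sq_mul_exp_le {q : ℝ} (hq : 0 ≤ q) :
    (1 + q) ^ 2 * Real.exp (-q / 4) ≤ 256 * Real.exp (-q / 8) := by
  have h1 : (1 + q) / 16 ≤ Real.exp (q / 16) := by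
    have := Real.add_one_le_exp (q / 16); linarith
  have h2 : ((1 + q) / 16) ^ 2 ≤ Real.exp (q / 16) ^ 2 := by gcongr
  have h3 : Real.exp (-q / 8) = Real.exp (q / 16) ^ 2 * Real.exp (-q / 4) := by
    rw [← Real.exp_nat_mul, ← Real.exp_add]; congr 1; push_cast; ring
  rw [h3, ← mul_assoc]
  gcongr
  linarith

lemma norm_rpow_mul_wideKernel_le {n : ℕ} {α s : ℝ} (hα : α ∈ Set.Ioo (0 : ℝ) 1) (hs : 0 < s)
    (z : EuclideanSpace ℝ (Fin n)) :
    ‖z‖ ^ α * wideKernel n 16 s z ≤ 32 * s ^ (α / 2) * wideKernel n 32 s z := by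
  obtain ⟨h0, h1⟩ := hα
  set q := ‖z‖ ^ 2 / s with hq
  have hq0 : 0 ≤ q := by positivity
  have e1 : ‖z‖ ^ α = s ^ (α / 2) * q ^ (α / 2) := by
    rw [← Real.mul_rpow hs.le hq0, hq, mul_div_cancel₀ _ hs.ne', ← Real.rpow_natCast,
      ← Real.rpow_mul (norm_nonneg _)]
    congr 1; push_cast; ring
  have e2 : q ^ (α / 2) ≤ 1 + q := by
    calc q ^ (α / 2) ≤ (1 + q) ^ (α / 2) := by gcongr; linarith
      _ ≤ (1 + q) ^ (1 : ℝ) := Real.rpow_le_rpow_of_exponent_le (by linarith) (by linarith)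
      _ = 1 + q := Real.rpow_one _
  have e3 : 1 + q ≤ 32 * Real.exp (q / 32) := by
    have := Real.add_one_le_exp (q / 32); linarith
  have e4 : Real.exp (-‖z‖ ^ 2 / (32 * s)) =
      Real.exp (q / 32) * Real.exp (-‖z‖ ^ 2 / (16 * s)) := by
    rw [← Real.exp_add]; congr 1; rw [hq]; field_simp; ring
  unfold wideKernel
  rw [e1, e4]
  calc _ ≤ s ^ (α / 2) * (32 * Real.exp (q / 32)) *
        ((4 * Real.pi * s) ^ (-(n : ℝ) / 2) * Real.exp (-‖z‖ ^ 2 / (16 * s))) := by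
        gcongr; exact e2.trans e3
    _ = _ := by ring

lemma abs_hessKernel_bracket_le {n : ℕ} (i j : Fin n) {s : ℝ} (hs : 0 < s)
    (z : EuclideanSpace ℝ (Fin n)) :
    |z i * z j / (4 * s ^ 2) - (if i = j then 1 else 0) / (2 * s)| ≤
      s⁻¹ * ((‖z‖ ^ 2 / s) / 4 + 1 / 2) := by
  have hi : |z i| ≤ ‖z‖ := PiLp.norm_apply_le z i
  have hj : |z j| ≤ ‖z‖ := PiLp.norm_apply_le z j
  have h1 : |z i * z j| ≤ ‖z‖ ^ 2 := by
    rw [abs_mul, sq]; gcongr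
  have h2 : |(if i = j then (1 : ℝ) else 0)| ≤ 1 := by split_ifs <;> simp
  calc _ ≤ |z i * z j / (4 * s ^ 2)| + |(if i = j then (1 : ℝ) else 0) / (2 * s)| := abs_sub _ _
    _ = |z i * z j| / (4 * s ^ 2) + |(if i = j then (1 : ℝ) else 0)| / (2 * s) := by
        rw [abs_div, abs_div, abs_of_pos (show 0 < 4 * s ^ 2 by positivity),
          abs_of_pos (show 0 < 2 * s by positivity)]
    _ ≤ ‖z‖ ^ 2 / (4 * s ^ 2) + 1 / (2 * s) := by gcongr
    _ = _ := by field_simp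

lemma abs_hessKernel_le {n : ℕ} (i j : Fin n) {s : ℝ} (hs : 0 < s)
    (z : EuclideanSpace ℝ (Fin n)) :
    |hessKernel n i j s z| ≤ 256 * s⁻¹ * wideKernel n 16 s z := by
  set q := ‖z‖ ^ 2 / s with hq
  have hq0 : 0 ≤ q := by positivity
  have e4 : Real.exp (-‖z‖ ^ 2 / (4 * s)) = Real.exp (-q / 4) := by
    congr 1; rw [hq]; field_simp
  have e16 : Real.exp (-‖z‖ ^ 2 / (16 * s)) = Real.exp (-q / 16) := by
    congr 1; rw [hq]; field_simp
  have hc : 0 < (4 * Real.pi * s) ^ (-(n : ℝ) / 2) := by positivity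
  unfold hessKernel wideKernel
  rw [abs_mul, abs_mul, abs_of_pos hc, Real.abs_exp, e4, e16]
  have hexp : Real.exp (-q / 8) ≤ Real.exp (-q / 16) := Real.exp_le_exp.2 (by linarith)
  calc _ ≤ (4 * Real.pi * s) ^ (-(n : ℝ) / 2) * Real.exp (-q / 4) *
        (s⁻¹ * (q / 4 + 1 / 2)) := by
        gcongr; exact abs_hessKernel_bracket_le i j hs z
    _ ≤ (4 * Real.pi * s) ^ (-(n : ℝ) / 2) * Real.exp (-q / 4) * (s⁻¹ * (1 + q) ^ 2) := by
        gcongr; nlinarith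
    _ = (4 * Real.pi * s) ^ (-(n : ℝ) / 2) * s⁻¹ * ((1 + q) ^ 2 * Real.exp (-q / 4)) := by ring
    _ ≤ (4 * Real.pi * s) ^ (-(n : ℝ) / 2) * s⁻¹ * (256 * Real.exp (-q / 16)) := by
        refine mul_le_mul_of_nonneg_left ?_ (by positivity)
        exact (one_add_sq_mul_exp_le hq0).trans (by gcongr)
    _ = _ := by ring

lemma hasDerivAt_hessKernel_line {n : ℕ} (i j : Fin n) {s : ℝ} (hs : 0 < s)
    (z h : EuclideanSpace ℝ (Fin n)) (θ : ℝ) :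
    HasDerivAt (fun θ : ℝ => hessKernel n i j s (z + θ • h))
      ((4 * Real.pi * s) ^ (-(n : ℝ) / 2) * Real.exp (-‖z + θ • h‖ ^ 2 / (4 * s)) *
        (-(inner ℝ (z + θ • h) h / (2 * s)) *
            ((z + θ • h) i * (z + θ • h) j / (4 * s ^ 2) - (if i = j then 1 else 0) / (2 * s)) +
          (h i * (z + θ • h) j + (z + θ • h) i * h j) / (4 * s ^ 2))) θ := by
  have hw : HasDerivAt (fun θ : ℝ => z + θ • h) h θ := by
    simpa using ((hasDerivAt_id θ).smul_const h).const_add z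
  have hN := hw.norm_sq
  have hcoord : ∀ k : Fin n, HasDerivAt (fun θ : ℝ => (z + θ • h) k) (h k) θ := fun k =>
    (EuclideanSpace.proj k : EuclideanSpace ℝ (Fin n) →L[ℝ] ℝ).hasFDerivAt.comp_hasDerivAt θ hw
  have h1 := ((hN.neg.div_const (4 * s)).exp.const_mul ((4 * Real.pi * s) ^ (-(n : ℝ) / 2))).mul
    ((((hcoord i).mul (hcoord j)).div_const (4 * s ^ 2)).sub_const
      ((if i = j then 1 else 0) / (2 * s)))
  refine h1.congr_deriv ?_
  simp only [Pi.neg_apply, Pi.mul_apply]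
  field_simp
  ring

lemma abs_deriv_hessKernel_line_le {n : ℕ} (i j : Fin n) {s : ℝ} (hs : 0 < s)
    (w h : EuclideanSpace ℝ (Fin n)) :
    |(4 * Real.pi * s) ^ (-(n : ℝ) / 2) * Real.exp (-‖w‖ ^ 2 / (4 * s)) *
        (-(inner ℝ w h / (2 * s)) *
            (w i * w j / (4 * s ^ 2) - (if i = j then 1 else 0) / (2 * s)) +
          (h i * w j + w i * h j) / (4 * s ^ 2))| ≤
      256 * ‖h‖ * s ^ (-(3 / 2) : ℝ) * wideKernel n 8 s w := by
  set q := ‖w‖ ^ 2 / s with hq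
  have hq0 : 0 ≤ q := by positivity
  have e4 : Real.exp (-‖w‖ ^ 2 / (4 * s)) = Real.exp (-q / 4) := by
    congr 1; rw [hq]; field_simp
  have e8 : Real.exp (-‖w‖ ^ 2 / (8 * s)) = Real.exp (-q / 8) := by
    congr 1; rw [hq]; field_simp
  have hc : 0 < (4 * Real.pi * s) ^ (-(n : ℝ) / 2) := by positivity
  have hwi : |w i| ≤ ‖w‖ := PiLp.norm_apply_le w i
  have hwj : |w j| ≤ ‖w‖ := PiLp.norm_apply_le w j
  have hhi : |h i| ≤ ‖h‖ := PiLp.norm_apply_le h i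
  have hhj : |h j| ≤ ‖h‖ := PiLp.norm_apply_le h j
  have hin : |inner ℝ w h| ≤ ‖w‖ * ‖h‖ := abs_real_inner_le_norm w h
  have hcross : |h i * w j + w i * h j| ≤ 2 * (‖w‖ * ‖h‖) := by
    calc _ ≤ |h i| * |w j| + |w i| * |h j| := by
          rw [← abs_mul, ← abs_mul]; exact abs_add_le _ _
      _ ≤ ‖h‖ * ‖w‖ + ‖w‖ * ‖h‖ := by gcongr
      _ = _ := by ring
  have hroot : ‖w‖ * s⁻¹ ^ 2 ≤ s ^ (-(3 / 2) : ℝ) * (1 + q) := by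
    have e : s ^ (-(3 / 2) : ℝ) = √s * s⁻¹ ^ 2 := by
      rw [Real.sqrt_eq_rpow, ← Real.rpow_natCast, ← Real.rpow_neg_one s, ← Real.rpow_mul hs.le,
        ← Real.rpow_add hs]
      norm_num
    have hw : ‖w‖ ≤ √s * (1 + q) := by
      have hsq := Real.sq_sqrt hs.le
      have hpos := Real.sqrt_pos.2 hs
      have : √s * q = ‖w‖ ^ 2 / √s := by
        rw [hq]; nth_rewrite 2 [← hsq]; field_simp
      rw [mul_add, mul_one, this]
      rw [← sub_nonneg, show √s + ‖w‖ ^ 2 / √s - ‖w‖ = ((√s - ‖w‖) ^ 2 + √s * ‖w‖) / √s by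
        field_simp; ring]
      positivity
    rw [e]
    calc _ ≤ √s * (1 + q) * s⁻¹ ^ 2 := by gcongr
      _ = _ := by ring
  have hmain : |-(inner ℝ w h / (2 * s)) *
            (w i * w j / (4 * s ^ 2) - (if i = j then 1 else 0) / (2 * s)) +
          (h i * w j + w i * h j) / (4 * s ^ 2)| ≤ ‖h‖ * s ^ (-(3 / 2) : ℝ) * (1 + q) ^ 2 := by
    calc _ ≤ |inner ℝ w h| / (2 * s) *
            |w i * w j / (4 * s ^ 2) - (if i = j then 1 else 0) / (2 * s)| +
          |h i * w j + w i * h j| / (4 * s ^ 2) := by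
          refine (abs_add_le _ _).trans_eq ?_
          rw [abs_mul, abs_neg, abs_div, abs_div, abs_of_pos (show 0 < 4 * s ^ 2 by positivity),
            abs_of_pos (show 0 < 2 * s by positivity)]
      _ ≤ ‖w‖ * ‖h‖ / (2 * s) * (s⁻¹ * (q / 4 + 1 / 2)) + 2 * (‖w‖ * ‖h‖) / (4 * s ^ 2) := by
          gcongr; exact abs_hessKernel_bracket_le i j hs w
      _ = ‖h‖ * (‖w‖ * s⁻¹ ^ 2) * (q / 8 + 3 / 4) := by field_simp; ring
      _ ≤ ‖h‖ * (s ^ (-(3 / 2) : ℝ) * (1 + q)) * (1 + q) := by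
          refine mul_le_mul (by gcongr) (by linarith) (by positivity) (by positivity)
      _ = _ := by ring
  unfold wideKernel
  rw [abs_mul, abs_mul, abs_of_pos hc, Real.abs_exp, e4, e8]
  calc _ ≤ (4 * Real.pi * s) ^ (-(n : ℝ) / 2) * Real.exp (-q / 4) *
        (‖h‖ * s ^ (-(3 / 2) : ℝ) * (1 + q) ^ 2) := by gcongr
    _ = (4 * Real.pi * s) ^ (-(n : ℝ) / 2) * (‖h‖ * s ^ (-(3 / 2) : ℝ)) *
        ((1 + q) ^ 2 * Real.exp (-q / 4)) := by ring
    _ ≤ (4 * Real.pi * s) ^ (-(n : ℝ) / 2) * (‖h‖ * s ^ (-(3 / 2) : ℝ)) *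
        (256 * Real.exp (-q / 8)) := by
        exact mul_le_mul_of_nonneg_left (one_add_sq_mul_exp_le hq0) (by positivity)
    _ = _ := by ring

lemma wideKernel_eight_le {n : ℕ} {s : ℝ} (hs : 0 < s) (z w : EuclideanSpace ℝ (Fin n))
    (h : ‖w - z‖ ^ 2 ≤ s) : wideKernel n 8 s w ≤ 2 * wideKernel n 16 s z := by
  have hz : ‖z‖ ^ 2 ≤ 2 * ‖w‖ ^ 2 + 2 * s := by
    have h1 : ‖z‖ ≤ ‖w‖ + ‖w - z‖ := by
      have := norm_sub_le w (w - z); simpa using this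
    have h2 : ‖z‖ ^ 2 ≤ (‖w‖ + ‖w - z‖) ^ 2 := by gcongr
    nlinarith [sq_nonneg (‖w‖ - ‖w - z‖)]
  have hexp : Real.exp (-‖w‖ ^ 2 / (8 * s)) ≤ 2 * Real.exp (-‖z‖ ^ 2 / (16 * s)) := by
    have h1 : Real.exp (1 / 8) ≤ 2 := by
      rw [← Real.le_log_iff_exp_le (by norm_num)]
      have := Real.log_two_gt_d9; linarith
    have h2 : -‖w‖ ^ 2 / (8 * s) ≤ 1 / 8 + -‖z‖ ^ 2 / (16 * s) := by
      rw [← sub_nonneg, show 1 / 8 + -‖z‖ ^ 2 / (16 * s) - -‖w‖ ^ 2 / (8 * s) =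
        (2 * ‖w‖ ^ 2 + 2 * s - ‖z‖ ^ 2) / (16 * s) by field_simp; ring]
      exact div_nonneg (by linarith) (by positivity)
    calc _ ≤ Real.exp (1 / 8 + -‖z‖ ^ 2 / (16 * s)) := Real.exp_le_exp.2 h2
      _ = Real.exp (1 / 8) * Real.exp (-‖z‖ ^ 2 / (16 * s)) := Real.exp_add _ _
      _ ≤ _ := by gcongr
  unfold wideKernel
  calc _ ≤ (4 * Real.pi * s) ^ (-(n : ℝ) / 2) * (2 * Real.exp (-‖z‖ ^ 2 / (16 * s))) := by gcongr
    _ = _ := by ring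

lemma abs_hessKernel_add_sub_le {n : ℕ} (i j : Fin n) {s : ℝ} (hs : 0 < s)
    (z h : EuclideanSpace ℝ (Fin n)) (hh : ‖h‖ ^ 2 ≤ s) :
    |hessKernel n i j s (z + h) - hessKernel n i j s z| ≤
      512 * ‖h‖ * s ^ (-(3 / 2) : ℝ) * wideKernel n 16 s z := by
  have key := norm_image_sub_le_of_norm_deriv_le_segment_01'
    (C := 512 * ‖h‖ * s ^ (-(3 / 2) : ℝ) * wideKernel n 16 s z)
    (fun θ _ => (hasDerivAt_hessKernel_line i j hs z h θ).hasDerivWithinAt) (fun θ hθ => by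
      rw [Real.norm_eq_abs]
      refine (abs_deriv_hessKernel_line_le i j hs (z + θ • h) h).trans ?_
      have hclose : ‖z + θ • h - z‖ ^ 2 ≤ s := by
        rw [add_sub_cancel_left, norm_smul, mul_pow]
        have : ‖θ‖ ^ 2 ≤ 1 := by
          rw [Real.norm_eq_abs, sq_abs]; nlinarith [hθ.1, hθ.2]
        nlinarith [sq_nonneg ‖h‖]
      calc _ ≤ 256 * ‖h‖ * s ^ (-(3 / 2) : ℝ) * (2 * wideKernel n 16 s z) := by
            gcongr; exact wideKernel_eight_le hs z _ hclose
        _ = _ := by ring)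
  simpa using key

lemma hasDerivAt_hessKernel_time {n : ℕ} (i j : Fin n) {s : ℝ} (hs : 0 < s)
    (z : EuclideanSpace ℝ (Fin n)) :
    HasDerivAt (fun s : ℝ => hessKernel n i j s z)
      ((4 * Real.pi * s) ^ (-(n : ℝ) / 2) * Real.exp (-‖z‖ ^ 2 / (4 * s)) *
        ((-(n : ℝ) / (2 * s) + ‖z‖ ^ 2 / (4 * s ^ 2)) *
            (z i * z j / (4 * s ^ 2) - (if i = j then 1 else 0) / (2 * s)) +
          (-(z i * z j) / (2 * s ^ 3) + (if i = j then 1 else 0) / (2 * s ^ 2)))) s := by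
  have hid := hasDerivAt_id s
  have h1 := (hid.const_mul (4 * Real.pi)).rpow_const (p := -(n : ℝ) / 2)
    (Or.inl (by simp only [id]; positivity))
  have h2 := ((hasDerivAt_const s (-‖z‖ ^ 2)).div (hid.const_mul 4)
    (by simp only [id]; positivity)).exp
  have h3 := (hasDerivAt_const s (z i * z j)).div ((hid.pow 2).const_mul 4)
    (by simp only [id, Pi.pow_apply]; positivity)
  have h4 := (hasDerivAt_const s (if i = j then (1 : ℝ) else 0)).div (hid.const_mul 2)
    (by simp only [id]; positivity)
  refine ((h1.mul h2).mul (h3.sub h4)).congr_deriv ?_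
  simp only [id, Pi.div_apply, Pi.mul_apply, Pi.sub_apply, Pi.pow_apply]
  rw [Real.rpow_sub_one (by positivity)]
  field_simp
  ring

lemma abs_hessKernel_time_sub_le {n : ℕ} (i j : Fin n) {s δ : ℝ} (hs : 0 < s) (hδ : 0 ≤ δ)
    (hδs : δ ≤ s) (z : EuclideanSpace ℝ (Fin n)) :
    |hessKernel n i j (s + δ) z - hessKernel n i j s z| ≤
      256 * (n + 1) * δ * s⁻¹ ^ 2 * wideKernel n 16 s z := by
  have key := norm_image_sub_le_of_norm_deriv_le_segment'
    (f := fun s : ℝ => hessKernel n i j s z)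
    (C := 256 * (n + 1) * s⁻¹ ^ 2 * wideKernel n 16 s z) (a := s) (b := s + δ)
    (fun σ hσ => (hasDerivAt_hessKernel_time i j (hs.trans_le hσ.1) z).hasDerivWithinAt)
    (fun σ hσ => by
      have hσ0 : 0 < σ := hs.trans_le hσ.1
      have hσ2 : σ ≤ 2 * s := by linarith [hσ.2]
      set q := ‖z‖ ^ 2 / σ with hq
      have hq0 : 0 ≤ q := by positivity
      have e4 : Real.exp (-‖z‖ ^ 2 / (4 * σ)) = Real.exp (-q / 4) := by
        congr 1; rw [hq]; field_simp
      have e8 : Real.exp (-q / 8) ≤ Real.exp (-‖z‖ ^ 2 / (16 * s)) := by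
        refine Real.exp_le_exp.2 ?_
        rw [hq, neg_div, neg_div, neg_le_neg_iff, div_div]
        exact div_le_div_of_nonneg_left (by positivity) (by positivity) (by linarith)
      have hc : 0 < (4 * Real.pi * σ) ^ (-(n : ℝ) / 2) := by positivity
      have hcs : (4 * Real.pi * σ) ^ (-(n : ℝ) / 2) ≤ (4 * Real.pi * s) ^ (-(n : ℝ) / 2) := by
        refine Real.rpow_le_rpow_of_nonpos (by positivity) ?_ ?_
        · have := hσ.1; gcongr
        · have : (0 : ℝ) ≤ n := n.cast_nonneg
          linarith
      have hinv : σ⁻¹ ≤ s⁻¹ := inv_anti₀ hs hσ.1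
      have hzi : |z i| ≤ ‖z‖ := PiLp.norm_apply_le z i
      have hzj : |z j| ≤ ‖z‖ := PiLp.norm_apply_le z j
      have hzz : |z i * z j| ≤ ‖z‖ ^ 2 := by rw [abs_mul, sq]; gcongr
      have hδij : |(if i = j then (1 : ℝ) else 0)| ≤ 1 := by split_ifs <;> simp
      have hn : (0 : ℝ) ≤ n := n.cast_nonneg
      have b1 : |-(n : ℝ) / (2 * σ) + ‖z‖ ^ 2 / (4 * σ ^ 2)| ≤ σ⁻¹ * (n / 2 + q / 4) := by
        refine (abs_add_le _ _).trans_eq ?_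
        rw [neg_div, abs_neg, abs_of_nonneg (by positivity), abs_of_nonneg (by positivity), hq]
        field_simp
      have b2 : |-(z i * z j) / (2 * σ ^ 3) + (if i = j then 1 else 0) / (2 * σ ^ 2)| ≤
          σ⁻¹ ^ 2 * (q / 2 + 1 / 2) := by
        calc _ ≤ |z i * z j| / (2 * σ ^ 3) + |(if i = j then (1 : ℝ) else 0)| / (2 * σ ^ 2) := by
              refine (abs_add_le _ _).trans_eq ?_
              rw [neg_div, abs_neg, abs_div, abs_div,
                abs_of_pos (show 0 < 2 * σ ^ 3 by positivity),
                abs_of_pos (show 0 < 2 * σ ^ 2 by positivity)]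
          _ ≤ ‖z‖ ^ 2 / (2 * σ ^ 3) + 1 / (2 * σ ^ 2) := by gcongr
          _ = _ := by rw [hq]; field_simp
      have hmain : |(-(n : ℝ) / (2 * σ) + ‖z‖ ^ 2 / (4 * σ ^ 2)) *
            (z i * z j / (4 * σ ^ 2) - (if i = j then 1 else 0) / (2 * σ)) +
          (-(z i * z j) / (2 * σ ^ 3) + (if i = j then 1 else 0) / (2 * σ ^ 2))| ≤
            (n + 1) * s⁻¹ ^ 2 * (1 + q) ^ 2 := by
        calc _ ≤ σ⁻¹ * (n / 2 + q / 4) * (σ⁻¹ * (q / 4 + 1 / 2)) + σ⁻¹ ^ 2 * (q / 2 + 1 / 2) := by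
              refine (abs_add_le _ _).trans ?_
              rw [abs_mul]
              gcongr
              exact abs_hessKernel_bracket_le i j hσ0 z
          _ = σ⁻¹ ^ 2 * ((n / 2 + q / 4) * (q / 4 + 1 / 2) + (q / 2 + 1 / 2)) := by ring
          _ ≤ s⁻¹ ^ 2 * ((n + 1) * (1 + q) ^ 2) := by
              gcongr
              nlinarith [mul_nonneg hn hq0, mul_nonneg hn (sq_nonneg q), sq_nonneg q]
          _ = _ := by ring
      rw [Real.norm_eq_abs, abs_mul, abs_mul, abs_of_pos hc, Real.abs_exp, e4]
      unfold wideKernel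
      calc _ ≤ (4 * Real.pi * σ) ^ (-(n : ℝ) / 2) * Real.exp (-q / 4) *
            ((n + 1) * s⁻¹ ^ 2 * (1 + q) ^ 2) := by gcongr
        _ = (4 * Real.pi * σ) ^ (-(n : ℝ) / 2) * ((n + 1) * s⁻¹ ^ 2) *
            ((1 + q) ^ 2 * Real.exp (-q / 4)) := by ring
        _ ≤ (4 * Real.pi * s) ^ (-(n : ℝ) / 2) * ((n + 1) * s⁻¹ ^ 2) *
            (256 * Real.exp (-‖z‖ ^ 2 / (16 * s))) := by
            refine mul_le_mul (by gcongr) ?_ (by positivity) (by positivity)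
            exact (one_add_sq_mul_exp_le hq0).trans (by gcongr)
        _ = _ := by ring)
    (s + δ) (Set.right_mem_Icc.2 (by linarith))
  rw [Real.norm_eq_abs] at key
  refine key.trans_eq ?_
  ring

lemma continuous_hessKernel {n : ℕ} (i j : Fin n) (s : ℝ) : Continuous (hessKernel n i j s) := by
  unfold hessKernel
  fun_prop

lemma integrable_hessKernel {n : ℕ} (i j : Fin n) {s : ℝ} (hs : 0 < s) :
    Integrable (hessKernel n i j s) :=
  ((integrable_wideKernel (b := 16) (by norm_num) hs).const_mul (256 * s⁻¹)).mono'
    (continuous_hessKernel i j s).aestronglyMeasurable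
    (Filter.Eventually.of_forall fun z => abs_hessKernel_le i j hs z)

lemma integrable_coord_mul_heatKernel {n : ℕ} (j : Fin n) {s : ℝ} (hs : 0 < s) :
    Integrable (fun z => -(heatKernel n s z) / (2 * s) * z j) := by
  refine (((integrable_wideKernel (n := n) (b := 8) (by norm_num) hs).const_mul
    (256 * (1 + s) / (2 * s)))).mono' ?_ (Filter.Eventually.of_forall fun z => ?_)
  · refine Continuous.aestronglyMeasurable ?_
    unfold heatKernel
    fun_prop
  · have hz : |z j| ≤ ‖z‖ := PiLp.norm_apply_le z j
    set q := ‖z‖ ^ 2 / s with hq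
    have hq0 : 0 ≤ q := by positivity
    have e4 : Real.exp (-‖z‖ ^ 2 / (4 * s)) = Real.exp (-q / 4) := by
      congr 1; rw [hq]; field_simp
    have e8 : Real.exp (-‖z‖ ^ 2 / (8 * s)) = Real.exp (-q / 8) := by
      congr 1; rw [hq]; field_simp
    have hz2 : ‖z‖ ≤ (1 + s) * (1 + q) ^ 2 := by
      have : ‖z‖ ^ 2 = q * s := by rw [hq]; field_simp
      have h1 : ‖z‖ ≤ 1 + q * s := by nlinarith [sq_nonneg (‖z‖ - 1)]
      nlinarith [mul_nonneg hq0 hs.le, mul_nonneg (mul_nonneg hq0 hq0) hs.le, sq_nonneg q]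
    have hc : 0 < (4 * Real.pi * s) ^ (-(n : ℝ) / 2) := by positivity
    rw [Real.norm_eq_abs, abs_mul, abs_div, abs_neg, abs_of_pos (show 0 < 2 * s by positivity)]
    unfold heatKernel wideKernel
    rw [abs_mul, abs_of_pos hc, Real.abs_exp, e4, e8]
    calc _ ≤ (4 * Real.pi * s) ^ (-(n : ℝ) / 2) * Real.exp (-q / 4) / (2 * s) *
          ((1 + s) * (1 + q) ^ 2) := by gcongr; exact hz.trans hz2
      _ = (4 * Real.pi * s) ^ (-(n : ℝ) / 2) * ((1 + s) / (2 * s)) *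
          ((1 + q) ^ 2 * Real.exp (-q / 4)) := by ring
      _ ≤ (4 * Real.pi * s) ^ (-(n : ℝ) / 2) * ((1 + s) / (2 * s)) *
          (256 * Real.exp (-q / 8)) := by
          exact mul_le_mul_of_nonneg_left (one_add_sq_mul_exp_le hq0) (by positivity)
      _ = _ := by ring

/-- The second derivatives of the heat kernel have mean zero. -/
lemma integral_hessKernel {n : ℕ} (i j : Fin n) {s : ℝ} (hs : 0 < s) :
    ∫ z, hessKernel n i j s z = 0 := by
  have hline : ∀ z, HasLineDerivAt ℝ (fun z => -(heatKernel n s z) / (2 * s) * z j)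
      (hessKernel n i j s z) z (stdBasis n i) := by
    intro z
    have h := (hasFDerivAt_gradient_heatKernel s j z).hasLineDerivAt (stdBasis n i)
    rw [← (hasFDerivAt_gradient_heatKernel s j z).fderiv] at h
    change HasLineDerivAt ℝ _ (d2Heat n i j s z) z _ at h
    rw [d2Heat_eq_hessKernel hs] at h
    simpa only [fderiv_heatKernel_stdBasis] using h
  have := integral_bilinear_hasLineDerivAt_right_eq_neg_left_of_integrable (μ := volume)
    (B := ContinuousLinearMap.mul ℝ ℝ) (f := fun _ : EuclideanSpace ℝ (Fin n) => (1 : ℝ))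
    (f' := fun _ => 0) (g := fun z => -(heatKernel n s z) / (2 * s) * z j)
    (g' := hessKernel n i j s) (v := stdBasis n i)
    (by simp) (by simpa using integrable_hessKernel i j hs)
    (by simpa using integrable_coord_mul_heatKernel j hs)
    (fun x _ => by simpa using (hasFDerivAt_const (1 : ℝ) x).hasLineDerivAt (stdBasis n i))
    (fun x _ => hline x)
  simpa using this

section Slice

variable {n : ℕ} {α K s : ℝ} {φ : EuclideanSpace ℝ (Fin n) → Fin n → Fin n → ℝ}

lemma abs_kernel_mul_sub_le (hα : α ∈ Set.Ioo (0 : ℝ) 1) (hs : 0 < s) (hK : 0 ≤ K)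
    (hφ : ∀ y y' i j, |φ y i j - φ y' i j| ≤ K * ‖y - y'‖ ^ α) (i j : Fin n)
    {k B : ℝ} (hB : 0 ≤ B) (x y : EuclideanSpace ℝ (Fin n))
    (hk : |k| ≤ B * wideKernel n 16 s (x - y)) :
    |k * (φ y i j - φ x i j)| ≤ 32 * B * K * s ^ (α / 2) * wideKernel n 32 s (x - y) := by
  have h1 := norm_rpow_mul_wideKernel_le hα hs (x - y)
  have h2 := hφ y x i j
  rw [norm_sub_rev] at h2
  have h3 := wideKernel_nonneg (b := 16) hs (x - y)
  rw [abs_mul]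
  calc _ ≤ B * wideKernel n 16 s (x - y) * (K * ‖x - y‖ ^ α) := by gcongr
    _ = B * K * (‖x - y‖ ^ α * wideKernel n 16 s (x - y)) := by ring
    _ ≤ B * K * (32 * s ^ (α / 2) * wideKernel n 32 s (x - y)) := by gcongr
    _ = _ := by ring

lemma abs_integral_kernel_le (hα : α ∈ Set.Ioo (0 : ℝ) 1) (hs : 0 < s) (hK : 0 ≤ K)
    (hφ : ∀ y y' i j, |φ y i j - φ y' i j| ≤ K * ‖y - y'‖ ^ α)
    {k : Fin n → Fin n → EuclideanSpace ℝ (Fin n) → ℝ} {B : ℝ} (hB : 0 ≤ B)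
    (x : EuclideanSpace ℝ (Fin n))
    (hk : ∀ i j y, |k i j y| ≤ B * wideKernel n 16 s (x - y)) :
    |∫ y, ∑ i, ∑ j, k i j y * (φ y i j - φ x i j)| ≤
      (n ^ 2 * 32 * 8 ^ ((n : ℝ) / 2)) * (B * K * s ^ (α / 2)) := by
  have hint := (integrable_wideKernel (n := n) (b := 32) (by norm_num) hs).comp_sub_left x
  have h1 := norm_integral_le_of_norm_le (μ := volume)
    (f := fun y => ∑ i, ∑ j, k i j y * (φ y i j - φ x i j))
    (hint.const_mul (n ^ 2 * (32 * B * K * s ^ (α / 2))))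
    (Filter.Eventually.of_forall fun y => by
      calc ‖∑ i, ∑ j, k i j y * (φ y i j - φ x i j)‖
          ≤ ∑ _i : Fin n, ∑ _j : Fin n,
              (32 * B * K * s ^ (α / 2) * wideKernel n 32 s (x - y)) :=
            norm_sum_le_of_le _ fun i _ => norm_sum_le_of_le _ fun j _ =>
              abs_kernel_mul_sub_le hα hs hK hφ i j hB x y (hk i j y)
        _ = _ := by simp; ring)
  rw [integral_const_mul, integral_sub_left_eq_self (wideKernel n 32 s),
    integral_wideKernel (by norm_num) hs, Real.norm_eq_abs] at h1
  refine h1.trans_eq ?_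
  norm_num
  ring

/-- The inner (spatial) integral of the Duhamel term, for the slice `φ` and elapsed time `s`. -/
def sliceIntegral (n : ℕ) (φ : EuclideanSpace ℝ (Fin n) → Fin n → Fin n → ℝ) (s : ℝ)
    (x : EuclideanSpace ℝ (Fin n)) : ℝ :=
  ∫ y, ∑ i, ∑ j, hessKernel n i j s (x - y) * (φ y i j - φ x i j)

lemma integrable_hessKernel_mul_sub (hα : α ∈ Set.Ioo (0 : ℝ) 1) (hs : 0 < s) (hK : 0 ≤ K)
    (hφ : ∀ y y' i j, |φ y i j - φ y' i j| ≤ K * ‖y - y'‖ ^ α)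
    (hφc : ∀ i j, Continuous fun y => φ y i j) (i j : Fin n)
    (x : EuclideanSpace ℝ (Fin n)) (c : ℝ) :
    Integrable fun y => hessKernel n i j s (x - y) * (φ y i j - c) := by
  have hH := (integrable_hessKernel i j hs).comp_sub_left x
  have h1 : Integrable fun y => hessKernel n i j s (x - y) * (φ y i j - φ x i j) := by
    refine (((integrable_wideKernel (n := n) (b := 32) (by norm_num) hs).comp_sub_left
      x).const_mul (32 * (256 * s⁻¹) * K * s ^ (α / 2))).mono' ?_
      (Filter.Eventually.of_forall fun y => ?_)
    · have := continuous_hessKernel i j s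
      have := hφc i j
      exact Continuous.aestronglyMeasurable (by fun_prop)
    · exact abs_kernel_mul_sub_le hα hs hK hφ i j (by positivity) x y
        (abs_hessKernel_le i j hs (x - y))
  refine (h1.add (hH.mul_const (φ x i j - c))).congr (Filter.Eventually.of_forall fun y => ?_)
  simp only [Pi.add_apply]
  ring

/-- By the mean-zero property, any constant may be subtracted from `φ`. -/
lemma integral_hessKernel_mul_sub_const (hα : α ∈ Set.Ioo (0 : ℝ) 1) (hs : 0 < s) (hK : 0 ≤ K)
    (hφ : ∀ y y' i j, |φ y i j - φ y' i j| ≤ K * ‖y - y'‖ ^ α)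
    (hφc : ∀ i j, Continuous fun y => φ y i j) (x x' : EuclideanSpace ℝ (Fin n)) :
    sliceIntegral n φ s x' =
      ∫ y, ∑ i, ∑ j, hessKernel n i j s (x' - y) * (φ y i j - φ x i j) := by
  have hI := integrable_hessKernel_mul_sub hα hs hK hφ hφc
  unfold sliceIntegral
  rw [integral_finsetSum _ fun i _ => integrable_finsetSum _ fun j _ => hI i j x' _,
    integral_finsetSum _ fun i _ => integrable_finsetSum _ fun j _ => hI i j x' _]
  refine Finset.sum_congr rfl fun i _ => ?_
  rw [integral_finsetSum _ fun j _ => hI i j x' _, integral_finsetSum _ fun j _ => hI i j x' _]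
  refine Finset.sum_congr rfl fun j _ => ?_
  rw [← sub_eq_zero, ← integral_sub (hI i j x' _) (hI i j x' _)]
  have : ∀ y, hessKernel n i j s (x' - y) * (φ y i j - φ x' i j) -
      hessKernel n i j s (x' - y) * (φ y i j - φ x i j) =
      hessKernel n i j s (x' - y) * (φ x i j - φ x' i j) := fun y => by ring
  simp_rw [this]
  rw [integral_mul_const, integral_sub_left_eq_self (hessKernel n i j s),
    integral_hessKernel i j hs, zero_mul]

lemma abs_sliceIntegral_le (hα : α ∈ Set.Ioo (0 : ℝ) 1) (hs : 0 < s) (hK : 0 ≤ K)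
    (hφ : ∀ y y' i j, |φ y i j - φ y' i j| ≤ K * ‖y - y'‖ ^ α) (x : EuclideanSpace ℝ (Fin n)) :
    |sliceIntegral n φ s x| ≤
      (n ^ 2 * 32 * 8 ^ ((n : ℝ) / 2)) * (256 * s⁻¹ * K * s ^ (α / 2)) :=
  abs_integral_kernel_le hα hs hK hφ (by positivity) x
    fun i j y => abs_hessKernel_le i j hs (x - y)

lemma abs_sliceIntegral_space_sub_le (hα : α ∈ Set.Ioo (0 : ℝ) 1) (hs : 0 < s) (hK : 0 ≤ K)
    (hφ : ∀ y y' i j, |φ y i j - φ y' i j| ≤ K * ‖y - y'‖ ^ α)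
    (hφc : ∀ i j, Continuous fun y => φ y i j) (x x' : EuclideanSpace ℝ (Fin n))
    (hx : ‖x' - x‖ ^ 2 ≤ s) :
    |sliceIntegral n φ s x' - sliceIntegral n φ s x| ≤
      (n ^ 2 * 32 * 8 ^ ((n : ℝ) / 2)) *
        (512 * ‖x' - x‖ * s ^ (-(3 / 2) : ℝ) * K * s ^ (α / 2)) := by
  have hI := integrable_hessKernel_mul_sub hα hs hK hφ hφc
  rw [integral_hessKernel_mul_sub_const hα hs hK hφ hφc x x', sliceIntegral,
    ← integral_sub
      (integrable_finsetSum _ fun i _ => integrable_finsetSum _ fun j _ => hI i j x' _)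
      (integrable_finsetSum _ fun i _ => integrable_finsetSum _ fun j _ => hI i j x _)]
  simp_rw [← Finset.sum_sub_distrib, ← sub_mul]
  refine abs_integral_kernel_le hα hs hK hφ (by positivity) x fun i j y => ?_
  have := abs_hessKernel_add_sub_le i j hs (x - y) (x' - x) hx
  rwa [show x - y + (x' - x) = x' - y by abel] at this

lemma abs_sliceIntegral_time_sub_le (hα : α ∈ Set.Ioo (0 : ℝ) 1) (hs : 0 < s) (hK : 0 ≤ K)
    (hφ : ∀ y y' i j, |φ y i j - φ y' i j| ≤ K * ‖y - y'‖ ^ α)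
    (hφc : ∀ i j, Continuous fun y => φ y i j) (x : EuclideanSpace ℝ (Fin n))
    {δ : ℝ} (hδ : 0 ≤ δ) (hδs : δ ≤ s) :
    |sliceIntegral n φ (s + δ) x - sliceIntegral n φ s x| ≤
      (n ^ 2 * 32 * 8 ^ ((n : ℝ) / 2)) *
        (256 * (n + 1) * δ * s⁻¹ ^ 2 * K * s ^ (α / 2)) := by
  have hI := fun s hs => integrable_hessKernel_mul_sub (s := s) hα hs hK hφ hφc
  rw [sliceIntegral, sliceIntegral, ← integral_sub
      (integrable_finsetSum _ fun i _ => integrable_finsetSum _ fun j _ =>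
        hI (s + δ) (by positivity) i j x _)
      (integrable_finsetSum _ fun i _ => integrable_finsetSum _ fun j _ => hI s hs i j x _)]
  simp_rw [← Finset.sum_sub_distrib, ← sub_mul]
  exact abs_integral_kernel_le hα hs hK hφ (by positivity) x
    fun i j y => abs_hessKernel_time_sub_le i j hs hδ hδs (x - y)

end Slice

lemma abs_integral_le_of_singular_bound {F : ℝ → ℝ} {A a t β : ℝ} (hβ : 0 < β)
    (hat : a ≤ t) (hF : ∀ τ ∈ Set.Ioo a t, |F τ| ≤ A * (t - τ) ^ (β - 1)) :
    |∫ τ in a..t, F τ| ≤ A * (β⁻¹ * (t - a) ^ β) := by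
  have hint : IntervalIntegrable (fun τ => (t - τ) ^ (β - 1)) volume a t := by
    have h := (intervalIntegral.intervalIntegrable_rpow' (a := t - a) (b := 0) (r := β - 1)
      (by linarith)).comp_sub_left t
    simpa using h
  have h1 := intervalIntegral.norm_integral_le_of_norm_le (f := F) (μ := volume) hat
    (by
      have : ∀ᵐ τ : ℝ, τ ≠ t := by simp [ae_iff]
      filter_upwards [this] with τ hτ hmem
      exact hF τ ⟨hmem.1, lt_of_le_of_ne hmem.2 hτ⟩) (hint.const_mul A)
  rw [intervalIntegral.integral_const_mul,
    intervalIntegral.integral_comp_sub_left (fun u => u ^ (β - 1)) t, sub_self,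
    integral_rpow (Or.inl (by linarith)), sub_add_cancel, Real.zero_rpow hβ.ne', sub_zero,
    Real.norm_eq_abs] at h1
  refine h1.trans_eq ?_
  field_simp

lemma abs_integral_le_of_tail_bound {F : ℝ → ℝ} {A t β p ρ : ℝ} (hA : 0 ≤ A) (hp : β < p)
    (hρ : 0 < ρ) (hρt : ρ ≤ t)
    (hF : ∀ τ ∈ Set.Ioc 0 (t - ρ), |F τ| ≤ A * (ρ ^ p * (t - τ) ^ (β - 1 - p))) :
    |∫ τ in (0)..(t - ρ), F τ| ≤ A * ((p - β)⁻¹ * ρ ^ β) := by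
  have h0 : (0 : ℝ) ∉ Set.uIcc ρ t := by
    rw [Set.uIcc_of_le hρt]; exact fun h => absurd h.1 (not_le.2 hρ)
  have hint : IntervalIntegrable (fun τ => (t - τ) ^ (β - 1 - p)) volume 0 (t - ρ) := by
    have h := (intervalIntegral.intervalIntegrable_rpow (μ := volume) (a := t) (b := ρ)
      (r := β - 1 - p) (Or.inr (by rwa [Set.uIcc_comm]))).comp_sub_left t
    simpa using h
  have h1 := intervalIntegral.norm_integral_le_of_norm_le (f := F) (μ := volume)
    (sub_nonneg.2 hρt) (Filter.Eventually.of_forall fun τ hτ => hF τ hτ)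
    ((hint.const_mul (ρ ^ p)).const_mul A)
  rw [intervalIntegral.integral_const_mul, intervalIntegral.integral_const_mul,
    intervalIntegral.integral_comp_sub_left (fun u => u ^ (β - 1 - p)) t, sub_sub_cancel, sub_zero,
    integral_rpow (Or.inr ⟨by intro h; linarith, h0⟩),
    show β - 1 - p + 1 = -(p - β) by ring, Real.norm_eq_abs] at h1
  refine h1.trans (mul_le_mul_of_nonneg_left ?_ hA)
  have hpb : 0 < p - β := by linarith
  have ht : 0 ≤ t ^ (-(p - β)) := Real.rpow_nonneg (hρ.le.trans hρt) _
  have e : ρ ^ β = ρ ^ p * ρ ^ (-(p - β)) := by rw [← Real.rpow_add hρ]; congr 1; ring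
  rw [e, div_neg, ← neg_div, neg_sub, div_eq_inv_mul, mul_left_comm]
  gcongr
  linarith

lemma abs_integral_le_of_singular_of_tail {F : ℝ → ℝ} {A t β p ρ : ℝ} (hA : 0 ≤ A) (hβ : 0 < β)
    (hp : β < p) (hρ : 0 < ρ) (ht : 0 ≤ t) (hFi : IntervalIntegrable F volume 0 t)
    (hF : ∀ τ ∈ Set.Ioo 0 t, |F τ| ≤ A * (t - τ) ^ (β - 1))
    (hF' : ∀ τ ∈ Set.Ioc 0 (t - ρ), |F τ| ≤ A * (ρ ^ p * (t - τ) ^ (β - 1 - p))) :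
    |∫ τ in (0)..t, F τ| ≤ A * ((β⁻¹ + (p - β)⁻¹) * ρ ^ β) := by
  have hpb : 0 < p - β := by linarith
  rcases le_total t ρ with h | h
  · refine (abs_integral_le_of_singular_bound hβ ht hF).trans ?_
    rw [sub_zero]
    gcongr
    linarith [inv_pos.2 hpb]
  · have hmem : t - ρ ∈ Set.uIcc 0 t := by
      rw [Set.uIcc_of_le ht]; exact ⟨by linarith, by linarith⟩
    rw [← intervalIntegral.integral_add_adjacent_intervals
      (hFi.mono_set (Set.uIcc_subset_uIcc_left hmem))
      (hFi.mono_set (Set.uIcc_subset_uIcc_right hmem))]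
    have h1 := abs_integral_le_of_tail_bound hA hp hρ h hF'
    have h2 := abs_integral_le_of_singular_bound (F := F) (a := t - ρ) hβ (by linarith)
      fun τ hτ => hF τ ⟨by linarith [hτ.1], hτ.2⟩
    rw [sub_sub_cancel] at h2
    refine (abs_add_le _ _).trans ((add_le_add h1 h2).trans_eq ?_)
    ring

/-- The constant in the bounds for `sliceIntegral`. -/
def sliceConst (n : ℕ) : ℝ := n ^ 2 * 32 * 8 ^ ((n : ℝ) / 2) * (512 * (n + 1))

section SlicePowers

variable {n : ℕ} {α K s : ℝ} {φ : EuclideanSpace ℝ (Fin n) → Fin n → Fin n → ℝ}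

lemma abs_sliceIntegral_le_rpow (hα : α ∈ Set.Ioo (0 : ℝ) 1) (hs : 0 < s) (hK : 0 ≤ K)
    (hφ : ∀ y y' i j, |φ y i j - φ y' i j| ≤ K * ‖y - y'‖ ^ α) (x : EuclideanSpace ℝ (Fin n)) :
    |sliceIntegral n φ s x| ≤ sliceConst n * K * s ^ (α / 2 - 1) := by
  refine (abs_sliceIntegral_le hα hs hK hφ x).trans ?_
  have e : s ^ (α / 2 - 1) = s⁻¹ * s ^ (α / 2) := by
    rw [Real.rpow_sub_one hs.ne']; ring
  have hn : (0 : ℝ) ≤ n := n.cast_nonneg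
  rw [e, sliceConst]
  calc _ = n ^ 2 * 32 * 8 ^ ((n : ℝ) / 2) * 256 * K * (s⁻¹ * s ^ (α / 2)) := by ring
    _ ≤ n ^ 2 * 32 * 8 ^ ((n : ℝ) / 2) * (512 * (n + 1)) * K * (s⁻¹ * s ^ (α / 2)) := by
      gcongr; linarith

lemma abs_sliceIntegral_space_sub_le_rpow (hα : α ∈ Set.Ioo (0 : ℝ) 1) (hs : 0 < s) (hK : 0 ≤ K)
    (hφ : ∀ y y' i j, |φ y i j - φ y' i j| ≤ K * ‖y - y'‖ ^ α)
    (hφc : ∀ i j, Continuous fun y => φ y i j) (x x' : EuclideanSpace ℝ (Fin n))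
    (hx : ‖x' - x‖ ^ 2 ≤ s) :
    |sliceIntegral n φ s x' - sliceIntegral n φ s x| ≤
      sliceConst n * K * ((‖x' - x‖ ^ 2) ^ (1 / 2 : ℝ) * s ^ (α / 2 - 1 - 1 / 2)) := by
  refine (abs_sliceIntegral_space_sub_le hα hs hK hφ hφc x x' hx).trans ?_
  have e : s ^ (α / 2 - 1 - 1 / 2) = s ^ (-(3 / 2) : ℝ) * s ^ (α / 2) := by
    rw [← Real.rpow_add hs]; congr 1; ring
  have hn : (0 : ℝ) ≤ n := n.cast_nonneg
  rw [e, sliceConst, ← Real.sqrt_eq_rpow, Real.sqrt_sq (norm_nonneg _)]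
  calc _ = n ^ 2 * 32 * 8 ^ ((n : ℝ) / 2) * 512 * K *
        (‖x' - x‖ * (s ^ (-(3 / 2) : ℝ) * s ^ (α / 2))) := by ring
    _ ≤ n ^ 2 * 32 * 8 ^ ((n : ℝ) / 2) * (512 * (n + 1)) * K *
        (‖x' - x‖ * (s ^ (-(3 / 2) : ℝ) * s ^ (α / 2))) := by
      gcongr; linarith

lemma abs_sliceIntegral_time_sub_le_rpow (hα : α ∈ Set.Ioo (0 : ℝ) 1) (hs : 0 < s) (hK : 0 ≤ K)
    (hφ : ∀ y y' i j, |φ y i j - φ y' i j| ≤ K * ‖y - y'‖ ^ α)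
    (hφc : ∀ i j, Continuous fun y => φ y i j) (x : EuclideanSpace ℝ (Fin n))
    {δ : ℝ} (hδ : 0 ≤ δ) (hδs : δ ≤ s) :
    |sliceIntegral n φ (s + δ) x - sliceIntegral n φ s x| ≤
      sliceConst n * K * (δ ^ (1 : ℝ) * s ^ (α / 2 - 1 - 1)) := by
  refine (abs_sliceIntegral_time_sub_le hα hs hK hφ hφc x hδ hδs).trans ?_
  have e : s ^ (α / 2 - 1 - 1) = s⁻¹ ^ 2 * s ^ (α / 2) := by
    rw [Real.rpow_sub_one hs.ne', Real.rpow_sub_one hs.ne']; ring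
  have hn : (0 : ℝ) ≤ n := n.cast_nonneg
  rw [e, sliceConst, Real.rpow_one]
  calc _ = n ^ 2 * 32 * 8 ^ ((n : ℝ) / 2) * (256 * (n + 1)) * K *
        (δ * (s⁻¹ ^ 2 * s ^ (α / 2))) := by ring
    _ ≤ n ^ 2 * 32 * 8 ^ ((n : ℝ) / 2) * (512 * (n + 1)) * K *
        (δ * (s⁻¹ ^ 2 * s ^ (α / 2))) := by
      gcongr; norm_num

end SlicePowers

lemma integral_d2Integrand_eq_sliceIntegral {n : ℕ}
    (f : ℝ → EuclideanSpace ℝ (Fin n) → Matrix (Fin n) (Fin n) ℝ) {t τ : ℝ} (h : τ < t)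
    (x : EuclideanSpace ℝ (Fin n)) :
    ∫ y, d2Integrand n f t x τ y = sliceIntegral n (fun y i j => f τ y i j) (t - τ) x := by
  unfold d2Integrand sliceIntegral
  simp_rw [d2Heat_eq_hessKernel (sub_pos.2 h)]

/-- **Estimates for the Duhamel term with a second-derivative source `f`**
(the `f`-part of the heat-equation Schauder estimates): sup, spatial Hölder
and time Hölder bounds (i)–(iii) with constant `C·K`, `K` the spatial Hölder
constant of `f`. -/
theorem statement13 (n : ℕ) (hn : 1 ≤ n) (α : ℝ) (hα : α ∈ Set.Ioo (0 : ℝ) 1) :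
    ∃ C : ℝ, 0 < C ∧
      ∀ T : ℝ, 0 < T →
      ∀ f : ℝ → EuclideanSpace ℝ (Fin n) → Matrix (Fin n) (Fin n) ℝ,
        ContinuousOn (fun q : ℝ × EuclideanSpace ℝ (Fin n) => f q.1 q.2)
          (Set.Icc 0 T ×ˢ Set.univ) →
      ∀ K : ℝ, 0 ≤ K →
        (∀ τ ∈ Set.Icc (0 : ℝ) T, ∀ y y' : EuclideanSpace ℝ (Fin n), ∀ i j : Fin n,
          |f τ y i j - f τ y' i j| ≤ K * ‖y - y'‖ ^ α) →
      -- absolute convergence of the defining integrals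
      (∀ t x, ∀ τ ∈ Set.Ioc (0 : ℝ) t, Integrable (fun y => d2Integrand n f t x τ y)) →
      (∀ t x, IntegrableOn (fun τ => ∫ y, d2Integrand n f t x τ y) (Set.Ioc 0 t)) →
      ∀ v : ℝ → EuclideanSpace ℝ (Fin n) → ℝ,
        (∀ t x, v t x = ∫ τ in Set.Ioc (0 : ℝ) t, ∫ y, d2Integrand n f t x τ y) →
        (∀ t : ℝ, 0 < t → t ≤ T → ∀ x x',
          |v t x' - v t x| ≤ C * K * ‖x' - x‖ ^ α) ∧
        (∀ t : ℝ, 0 < t → t ≤ T → ∀ x, |v t x| ≤ C * K * t ^ (α / 2)) ∧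
        (∀ t t' : ℝ, 0 ≤ t → t < t' → t' ≤ T → ∀ x,
          |v t' x - v t x| ≤ C * K * (t' - t) ^ (α / 2)) := by
  obtain ⟨hα0, hα1⟩ := id hα
  have hβ : 0 < α / 2 := by positivity
  have hβ2 : 0 < 1 / 2 - α / 2 := by linarith
  have hβ1 : 0 < 1 - α / 2 := by linarith
  have hM : 0 < sliceConst n := by
    have : (0 : ℝ) < n := by exact_mod_cast hn
    unfold sliceConst; positivity
  refine ⟨sliceConst n * (3 * (α / 2)⁻¹ + 2 * (1 / 2 - α / 2)⁻¹ + 2 * (1 - α / 2)⁻¹),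
    by positivity, ?_⟩
  intro T hT f hfc K hK hf _ hout v hv
  set M := sliceConst n
  set a := (α / 2)⁻¹
  set b := (1 / 2 - α / 2)⁻¹
  set c := (1 - α / 2)⁻¹
  have ha0 : 0 < a := inv_pos.2 hβ
  have hb0 : 0 < b := inv_pos.2 hβ2
  have hc0 : 0 < c := inv_pos.2 hβ1
  have hMK : 0 ≤ M * K := by positivity
  set g : ℝ → EuclideanSpace ℝ (Fin n) → ℝ → ℝ :=
    fun t x τ => ∫ y, d2Integrand n f t x τ y
  have hgs : ∀ {t τ : ℝ}, τ < t → ∀ x,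
      g t x τ = sliceIntegral n (fun y i j => f τ y i j) (t - τ) x :=
    fun h x => integral_d2Integrand_eq_sliceIntegral f h x
  have hcont : ∀ τ ∈ Set.Icc 0 T, ∀ i j, Continuous fun y => f τ y i j := fun τ hτ i j => by
    have h : Continuous fun y => f τ y :=
      hfc.comp_continuous (f := fun y => (τ, y)) (by fun_prop) fun y => ⟨hτ, trivial⟩
    exact h.matrix_elem i j
  have hvg : ∀ {t}, 0 ≤ t → ∀ x, v t x = ∫ τ in (0)..t, g t x τ := fun ht x => by
    rw [hv, intervalIntegral.integral_of_le ht]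
  have hgi : ∀ {t}, 0 ≤ t → ∀ x, IntervalIntegrable (g t x) volume 0 t := fun ht x =>
    (intervalIntegrable_iff_integrableOn_Ioc_of_le ht).2 (hout _ x)
  have hsing : ∀ {t τ : ℝ}, 0 ≤ τ → τ < t → t ≤ T → ∀ x,
      |g t x τ| ≤ M * K * (t - τ) ^ (α / 2 - 1) := fun h0 h1 h2 x => by
    rw [hgs h1]
    exact abs_sliceIntegral_le_rpow hα (sub_pos.2 h1) hK (hf _ ⟨h0, by linarith⟩) x
  refine ⟨fun t ht htT x x' => ?_, fun t ht htT x => ?_, fun t t' ht htt' ht'T x => ?_⟩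
  · rcases eq_or_ne x' x with rfl | hne
    · simp only [sub_self, abs_zero]
      positivity
    have hρ : 0 < ‖x' - x‖ ^ 2 := by
      have := norm_pos_iff.2 (sub_ne_zero.2 hne); positivity
    rw [hvg ht.le, hvg ht.le, ← intervalIntegral.integral_sub (hgi ht.le _) (hgi ht.le _)]
    refine (abs_integral_le_of_singular_of_tail (A := 2 * (M * K)) (β := α / 2) (p := 1 / 2)
      (ρ := ‖x' - x‖ ^ 2) (by positivity) hβ (by linarith) hρ ht.le
      ((hgi ht.le _).sub (hgi ht.le _)) (fun τ hτ => ?_) fun τ hτ => ?_).trans ?_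
    · refine (abs_sub _ _).trans ((add_le_add (hsing hτ.1.le hτ.2 htT x')
        (hsing hτ.1.le hτ.2 htT x)).trans_eq ?_)
      ring
    · have hτt : τ < t := by linarith [hτ.2]
      have hτT : τ ∈ Set.Icc 0 T := ⟨hτ.1.le, by linarith⟩
      rw [hgs hτt, hgs hτt]
      refine (abs_sliceIntegral_space_sub_le_rpow hα (sub_pos.2 hτt) hK (hf τ hτT)
        (hcont τ hτT) x x' (by linarith [hτ.2])).trans ?_
      have h0 := sub_pos.2 hτt
      exact mul_le_mul_of_nonneg_right (show M * K ≤ 2 * (M * K) by linarith) (by positivity)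
    · have e : (‖x' - x‖ ^ 2) ^ (α / 2) = ‖x' - x‖ ^ α := by
        rw [← Real.rpow_natCast, ← Real.rpow_mul (norm_nonneg _)]
        congr 1; push_cast; ring
      rw [e]
      calc _ = M * (2 * a + 2 * b) * K * ‖x' - x‖ ^ α := by ring
        _ ≤ _ := by gcongr M * ?_ * K * _; linarith
  · rw [hvg ht.le]
    refine (abs_integral_le_of_singular_bound (A := M * K) hβ ht.le
      fun τ hτ => hsing hτ.1.le hτ.2 htT x).trans ?_
    rw [sub_zero]
    calc _ = M * a * K * t ^ (α / 2) := by ring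
      _ ≤ _ := by gcongr M * ?_ * K * _; linarith
  · have ht' : 0 ≤ t' := ht.trans htt'.le
    have hδ : 0 < t' - t := sub_pos.2 htt'
    have hmem : t ∈ Set.uIcc 0 t' := by
      rw [Set.uIcc_of_le ht']; exact ⟨ht, htt'.le⟩
    have hi1 := (hgi ht' x).mono_set (Set.uIcc_subset_uIcc_left hmem)
    have hi2 := (hgi ht' x).mono_set (Set.uIcc_subset_uIcc_right hmem)
    rw [hvg ht', hvg ht, ← intervalIntegral.integral_add_adjacent_intervals hi1 hi2,
      add_sub_right_comm, ← intervalIntegral.integral_sub hi1 (hgi ht x)]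
    have h2 := abs_integral_le_of_singular_bound (A := M * K) (F := g t' x) hβ htt'.le
      fun τ hτ => hsing (ht.trans hτ.1.le) hτ.2 ht'T x
    have h1 := abs_integral_le_of_singular_of_tail (F := fun τ => g t' x τ - g t x τ)
      (A := 2 * (M * K)) (β := α / 2) (p := 1) (ρ := t' - t) (t := t) (by positivity) hβ
      (by linarith) hδ ht (hi1.sub (hgi ht x)) (fun τ hτ => by
        have hs := sub_pos.2 hτ.2
        have hmono : (t' - τ) ^ (α / 2 - 1) ≤ (t - τ) ^ (α / 2 - 1) :=
          Real.rpow_le_rpow_of_nonpos hs (by linarith) (by linarith)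
        have hbig := hsing hτ.1.le (hτ.2.trans htt') ht'T x
        have hsmall := hsing hτ.1.le hτ.2 (htt'.le.trans ht'T) x
        calc _ ≤ |g t' x τ| + |g t x τ| := abs_sub _ _
          _ ≤ M * K * (t' - τ) ^ (α / 2 - 1) + M * K * (t - τ) ^ (α / 2 - 1) :=
            add_le_add hbig hsmall
          _ ≤ M * K * (t - τ) ^ (α / 2 - 1) + M * K * (t - τ) ^ (α / 2 - 1) := by gcongr
          _ = _ := by ring) (fun τ hτ => by
        have hτt : τ < t := by linarith [hτ.2]
        have hτT : τ ∈ Set.Icc 0 T := ⟨hτ.1.le, by linarith⟩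
        have h0 := sub_pos.2 hτt
        have h3 := abs_sliceIntegral_time_sub_le_rpow hα h0 hK (hf τ hτT)
          (hcont τ hτT) x hδ.le (by linarith [hτ.2])
        rw [show t - τ + (t' - t) = t' - τ by ring] at h3
        rw [hgs hτt, hgs (hτt.trans htt')]
        exact h3.trans (mul_le_mul_of_nonneg_right (show M * K ≤ 2 * (M * K) by linarith)
          (by positivity)))
    refine (abs_add_le _ _).trans ((add_le_add h1 h2).trans ?_)
    calc _ = M * (3 * a + 2 * c) * K * (t' - t) ^ (α / 2) := by ring
      _ ≤ _ := by gcongr M * ?_ * K * _; linarith
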